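/- arXiv:1212.5694 — 2 statements merged into one kernel-verified Lean document; each statement's English description precedes it below -/
import Mathlib

section
/- Let R be a commutative ring, A = (a_{ij}) ∈ R^{m×n}, b = (b_i) ∈ R^m, and let X = X_1 × ⋯ × X_n be an integral d-grid (for all j, differences of distinct elements of X_j are non-zero-divisors; e.g. R an integral domain). If m ≤ d_1 + ⋯ + d_n and per_d(A) ≠ 0, where d = (d_1,…,d_n), then there exists x ∈ X such that Σ_{j=1}^n a_{ij} x_j ≠ b_i for every i = 1,…,m. -/
open Finset

/-!
Suppose every point of the grid satisfies one of the equations `∑ j, a i j * x j = b i`. Then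
`f = ∏ i, (∑ j, a i j * X j - b i)` vanishes on the grid, while its coefficient at the top degree
monomial `X ^ δ` is `per_δ(A)`. On `k + 1` nodes the last row of the adjugate of the Vandermonde
matrix kills all powers below `k` and sends the `k`-th power to the Vandermonde determinant, so
weighting the values of `f` by products of such rows recovers `coeff δ f` times a product of
Vandermonde determinants. On an integral grid the latter is not a zero divisor, whence
`per_δ(A) = 0`.
-/

section Vandermonde

variable {R : Type*} [CommRing R] {k : ℕ}

/-- The weights of the `k`-th divided difference at the nodes `v`, multiplied by the Vandermonde
determinant so that they exist over every commutative ring. -/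
def vandermondeWeight (v : Fin (k + 1) → R) : Fin (k + 1) → R :=
  (Matrix.vandermonde v).adjugate (Fin.last k)

theorem sum_vandermondeWeight_mul_pow (v : Fin (k + 1) → R) (l : Fin (k + 1)) :
    ∑ i, vandermondeWeight v i * v i ^ (l : ℕ) =
      if Fin.last k = l then (Matrix.vandermonde v).det else 0 := by
  simpa [vandermondeWeight, Matrix.mul_apply, Matrix.one_apply] using
    congr_fun₂ (Matrix.adjugate_mul (Matrix.vandermonde v)) (Fin.last k) l

theorem sum_vandermondeWeight_mul_pow_of_lt (v : Fin (k + 1) → R) {l : ℕ} (hl : l < k) :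
    ∑ i, vandermondeWeight v i * v i ^ l = 0 := by
  have hne : Fin.last k ≠ ⟨l, hl.trans k.lt_succ_self⟩ := fun h => hl.ne' (congr_arg Fin.val h)
  simpa [hne] using sum_vandermondeWeight_mul_pow v ⟨l, hl.trans k.lt_succ_self⟩

theorem sum_vandermondeWeight_mul_pow_last (v : Fin (k + 1) → R) :
    ∑ i, vandermondeWeight v i * v i ^ k = (Matrix.vandermonde v).det := by
  simpa using sum_vandermondeWeight_mul_pow v (Fin.last k)

theorem det_vandermonde_mem_nonZeroDivisors {v : Fin k → R}
    (hv : Pairwise fun i j => v i - v j ∈ nonZeroDivisors R) :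
    (Matrix.vandermonde v).det ∈ nonZeroDivisors R := by
  rw [Matrix.det_vandermonde]
  exact prod_mem fun i _ => prod_mem fun j hj => hv (mem_Ioi.1 hj).ne'

end Vandermonde

section Nullstellensatz

open MvPolynomial

variable {R σ : Type*} [CommRing R] {t : σ →₀ ℕ}

theorem exists_lt_of_degree_le_of_ne {s : σ →₀ ℕ} (hdeg : s.degree ≤ t.degree) (hne : s ≠ t) :
    ∃ j, s j < t j := by
  by_contra! hts
  obtain ⟨r, rfl⟩ := exists_add_of_le (show t ≤ s from hts)
  have hr : r.degree = 0 := by simpa using hdeg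
  exact hne (by rw [(Finsupp.degree_eq_zero_iff r).1 hr, add_zero])

theorem prod_sum_vandermondeWeight_mul_pow [Fintype σ] [DecidableEq σ]
    (v : ∀ j, Fin (t j + 1) → R) {s : σ →₀ ℕ} (hs : s.degree ≤ t.degree) :
    ∏ j, ∑ i, vandermondeWeight (v j) i * v j i ^ s j =
      if s = t then ∏ j, (Matrix.vandermonde (v j)).det else 0 := by
  split_ifs with h
  · subst h
    exact prod_congr rfl fun j _ => sum_vandermondeWeight_mul_pow_last (v j)
  · obtain ⟨j, hj⟩ := exists_lt_of_degree_le_of_ne hs h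
    exact prod_eq_zero (mem_univ j) (sum_vandermondeWeight_mul_pow_of_lt (v j) hj)

theorem sum_prod_vandermondeWeight_mul_eval [Fintype σ] [DecidableEq σ]
    (v : ∀ j, Fin (t j + 1) → R) {f : MvPolynomial σ R} (hf : f.totalDegree ≤ t.degree) :
    ∑ x : ∀ j, Fin (t j + 1),
        (∏ j, vandermondeWeight (v j) (x j)) * eval (fun j => v j (x j)) f =
      coeff t f * ∏ j, (Matrix.vandermonde (v j)).det := by
  calc
    _ = ∑ s ∈ f.support, coeff s f *
          ∏ j, ∑ i, vandermondeWeight (v j) i * v j i ^ s j := by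
      simp_rw [eval_eq', mul_sum, Fintype.prod_sum, prod_mul_distrib, mul_sum, mul_left_comm]
      exact sum_comm
    _ = ∑ s ∈ f.support, coeff s f *
          if s = t then ∏ j, (Matrix.vandermonde (v j)).det else 0 :=
      sum_congr rfl fun s hs => by
        rw [prod_sum_vandermondeWeight_mul_pow v ((le_totalDegree hs).trans hf)]
    _ = coeff t f * ∏ j, (Matrix.vandermonde (v j)).det := by
      simp +contextual [mul_ite, eq_comm]

theorem exists_eval_ne_zero_of_coeff_ne_zero [Finite σ] {f : MvPolynomial σ R}
    (hf : f.totalDegree ≤ t.degree) (hcoeff : coeff t f ≠ 0)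
    (S : σ → Finset R) (hS : ∀ j, t j < #(S j))
    (hint : ∀ j, (S j : Set R).Pairwise fun x y => x - y ∈ nonZeroDivisors R) :
    ∃ x : σ → R, (∀ j, x j ∈ S j) ∧ eval x f ≠ 0 := by
  classical
  cases nonempty_fintype σ
  by_contra! hzero
  let e (j : σ) : Fin (t j + 1) ↪ S j :=
    (Fin.castLEEmb (hS j)).trans (S j).equivFin.symm.toEmbedding
  let v (j : σ) (i : Fin (t j + 1)) : R := e j i
  have hdet : ∏ j, (Matrix.vandermonde (v j)).det ∈ nonZeroDivisors R :=
    prod_mem fun j _ => det_vandermonde_mem_nonZeroDivisors fun i i' hne =>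
      hint j (e j i).2 (e j i').2 (Subtype.coe_injective.ne ((e j).injective.ne hne))
  have hsum : coeff t f * ∏ j, (Matrix.vandermonde (v j)).det = 0 := by
    rw [← sum_prod_vandermondeWeight_mul_eval v hf]
    exact sum_eq_zero fun x _ => by rw [hzero _ fun j => (e j (x j)).2, mul_zero]
  exact hcoeff ((mul_right_mem_nonZeroDivisors_eq_zero_iff hdet).1 hsum)

end Nullstellensatz

section ProductsOfAffineForms

open MvPolynomial

variable {R ι σ : Type*} [CommSemiring R]

theorem totalDegree_prod_le_card {s : Finset ι} {f : ι → MvPolynomial σ R}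
    (hf : ∀ i ∈ s, (f i).totalDegree ≤ 1) : (∏ i ∈ s, f i).totalDegree ≤ #s :=
  (totalDegree_finsetProd s f).trans (by simpa using sum_le_card_nsmul s _ 1 hf)

theorem coeff_prod_add_C [Fintype ι] {f : ι → MvPolynomial σ R}
    (hf : ∀ i, (f i).totalDegree ≤ 1) (c : ι → R) {t : σ →₀ ℕ} (ht : Fintype.card ι ≤ t.degree) :
    coeff t (∏ i, (f i + C (c i))) = coeff t (∏ i, f i) := by
  classical
  rw [Fintype.prod_add, coeff_sum, sum_eq_single_of_mem univ (mem_univ _)]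
  · simp
  · intro s _ hs
    have hdeg : (∏ i ∈ s, f i).totalDegree < t.degree :=
      (totalDegree_prod_le_card fun i _ => hf i).trans_lt
        (((card_lt_iff_ne_univ s).2 hs).trans_le ht)
    rw [← map_prod, mul_comm, coeff_C_mul, coeff_eq_zero_of_totalDegree_lt hdeg, mul_zero]

variable [Fintype ι] [Fintype σ] [DecidableEq ι] [DecidableEq σ]

/-- The paper's `per_δ(A)`: the sum of the products `∏ i, A i (τ i)` over all maps `τ` whose fiber
over each column `j` has `δ j` elements. -/
def fiberPermanent (A : Matrix ι σ R) (δ : σ → ℕ) : R :=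
  ∑ τ : ι → σ with ∀ j, #{i | τ i = j} = δ j, ∏ i, A i (τ i)

theorem sum_eq_card_of_fiberPermanent_ne_zero {A : Matrix ι σ R} {δ : σ → ℕ}
    (h : fiberPermanent A δ ≠ 0) : ∑ j, δ j = Fintype.card ι := by
  obtain ⟨τ, hτ, -⟩ := exists_ne_zero_of_sum_ne_zero h
  simp_rw [← (mem_filter.1 hτ).2]
  exact (card_eq_sum_card_fiberwise fun _ _ => mem_univ _).symm

theorem coeff_prod_toMvPolynomial (A : Matrix ι σ R) (t : σ →₀ ℕ) :
    coeff t (∏ i, A.toMvPolynomial i) = fiberPermanent A t := by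
  have hfiber (τ : ι → σ) :
      ∑ i, Finsupp.single (τ i) 1 = t ↔ ∀ j, #{i | τ i = j} = t j := by
    simp [Finsupp.ext_iff, Finsupp.finsetSum_apply, Finsupp.single_apply]
  simp_rw [Matrix.toMvPolynomial, Fintype.prod_sum, ← monomial_sum_prod, coeff_sum, coeff_monomial,
    hfiber, fiberPermanent, sum_filter]

end ProductsOfAffineForms

theorem permanent_lemma_general {R ι σ : Type*} [CommRing R] [Fintype ι] [DecidableEq ι]
    [Fintype σ] [DecidableEq σ] (A : Matrix ι σ R) (b : ι → R) (X : σ → Finset R) (δ : σ → ℕ)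
    (hδ : ∀ j, δ j < #(X j))
    (hint : ∀ j, (X j : Set R).Pairwise fun x y => x - y ∈ nonZeroDivisors R)
    (hper : fiberPermanent A δ ≠ 0) :
    ∃ x : σ → R, (∀ j, x j ∈ X j) ∧ ∀ i, A.mulVec x i ≠ b i := by
  let t : σ →₀ ℕ := Finsupp.equivFunOnFinite.symm δ
  have hcard : t.degree = Fintype.card ι := by
    rw [Finsupp.degree_eq_sum]
    exact sum_eq_card_of_fiberPermanent_ne_zero hper
  let f : MvPolynomial σ R := ∏ i, (A.toMvPolynomial i + MvPolynomial.C (-b i))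
  have hdeg : f.totalDegree ≤ t.degree := hcard ▸ totalDegree_prod_le_card fun i _ => by
    rw [map_neg, ← sub_eq_add_neg]
    exact (MvPolynomial.totalDegree_sub_C_le _ _).trans (A.toMvPolynomial_totalDegree_le i)
  have hcoeff : f.coeff t = fiberPermanent A δ :=
    (coeff_prod_add_C A.toMvPolynomial_totalDegree_le _ hcard.ge).trans
      (coeff_prod_toMvPolynomial A t)
  obtain ⟨x, hxX, hx⟩ := exists_eval_ne_zero_of_coeff_ne_zero hdeg (hcoeff ▸ hper) X hδ hint
  refine ⟨x, hxX, fun i hi => hx ?_⟩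
  rw [map_prod]
  exact prod_eq_zero (mem_univ i) (by simp [Matrix.toMvPolynomial_eval_eq_apply, hi])

/-- Permanent Lemma: over an integral grid with `m ≤ Σ d_j`, if `per_d(A) ≠ 0`, then
there is a grid point `x` with `(Ax)_i ≠ b_i` for all `i`. -/
theorem permanent_lemma {R : Type*} [CommRing R] {m n : ℕ}
    (A : Fin m → Fin n → R) (b : Fin m → R)
    (X : Fin n → Finset R) (hX : ∀ j, (X j).Nonempty)
    (d : Fin n → ℕ) (hd : ∀ j, d j = (X j).card - 1)
    (hint : ∀ j, ∀ x ∈ X j, ∀ w ∈ X j, x ≠ w → x - w ∈ nonZeroDivisors R)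
    (hm : m ≤ ∑ j, d j)
    (hper : ∑ σ ∈ (Finset.univ : Finset (Fin m → Fin n)).filter
        (fun σ => ∀ j, (Finset.univ.filter (fun i => σ i = j)).card = d j),
        ∏ i, A i (σ i) ≠ 0) :
    ∃ x : Fin n → R, (∀ j, x j ∈ X j) ∧ ∀ i, ∑ j, A i j * x j ≠ b i :=
  permanent_lemma_general A b X d (fun j => hd j ▸ Nat.sub_one_lt (hX j).card_pos.ne')
    (fun j x hx y hy => hint j x hx y hy) (by unfold fiberPermanent; convert hper)
end

section
/- Let P ∈ ℤ[X_1,…,X_n], let d_1,…,d_n ∈ ℕ, and set X := {0,…,d_1} × ⋯ × {0,…,d_n} ⊆ ℤ^n. If deg(P) ≤ d_1 + ⋯ + d_n, then (−1)^{d_1+⋯+d_n} · (∏_{j=1}^n d_j!) · P_d = Σ_{x ∈ X} ( ∏_{j=1}^n (−1)^{x_j} · C(d_j, x_j) ) · P(x), where P_d denotes the coefficient of X_1^{d_1}⋯X_n^{d_n} in P and C(d, x) is the binomial coefficient. -/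
open MvPolynomial Finset

/-!
The right-hand side is linear in `P`, and on a monomial it factors over the coordinates: it sends
`∏ X_j ^ m_j` to `∏_j ∑_k (-1)^k C(d_j, k) k ^ m_j`. Up to the sign `(-1)^{d_j}`, the `j`-th factor
is the `d_j`-th forward difference of `t ↦ t ^ m_j` at `0`, which is `0` for `m_j < d_j` and `d_j!`
for `m_j = d_j`. So only monomials `m ≥ d` contribute, and when `deg P ≤ ∑ d_j` the only one of
these that can occur in `P` is `d` itself.
-/

section AlternatingSum

theorem sum_neg_one_pow_mul_choose_mul_eq_fwdDiff_iter {M R : Type*} [AddCommMonoid M] [Ring R]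
    (f : M → R) (h y : M) (n : ℕ) :
    ∑ k ∈ range (n + 1), ((-1) ^ k * (n.choose k : R)) * f (y + k • h)
      = (-1) ^ n * (fwdDiff h)^[n] f y := by
  rw [fwdDiff_iter_eq_sum_shift, mul_sum]
  refine sum_congr rfl fun k hk => ?_
  have sign : (-1 : R) ^ n * (-1) ^ (n - k) = (-1) ^ k := by
    obtain ⟨r, rfl⟩ := Nat.exists_eq_add_of_le (mem_range_succ_iff.1 hk)
    rw [Nat.add_sub_cancel_left, pow_add, mul_assoc, ← pow_add, (Even.add_self r).neg_one_pow,
      mul_one]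
  rw [zsmul_eq_mul, ← sign]
  push_cast
  simp only [mul_assoc]

variable {R : Type*} [CommRing R]

theorem sum_neg_one_pow_mul_choose_mul_pow_eq_fwdDiff_iter (n e : ℕ) :
    ∑ k ∈ range (n + 1), ((-1) ^ k * (n.choose k : R)) * (k : R) ^ e
      = (-1) ^ n * (fwdDiff 1)^[n] (fun r : R => r ^ e) 0 := by
  simpa using sum_neg_one_pow_mul_choose_mul_eq_fwdDiff_iter (fun r : R => r ^ e) 1 0 n

theorem sum_neg_one_pow_mul_choose_mul_pow_eq_zero_of_lt {n e : ℕ} (h : e < n) :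
    ∑ k ∈ range (n + 1), ((-1) ^ k * (n.choose k : R)) * (k : R) ^ e = 0 := by
  rw [sum_neg_one_pow_mul_choose_mul_pow_eq_fwdDiff_iter, fwdDiff_iter_pow_eq_zero_of_lt h,
    Pi.zero_apply, mul_zero]

theorem sum_neg_one_pow_mul_choose_mul_pow_self (n : ℕ) :
    ∑ k ∈ range (n + 1), ((-1) ^ k * (n.choose k : R)) * (k : R) ^ n
      = (-1) ^ n * (n.factorial : R) := by
  rw [sum_neg_one_pow_mul_choose_mul_pow_eq_fwdDiff_iter, fwdDiff_iter_eq_factorial,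
    Pi.natCast_apply]

end AlternatingSum

section WeightedGridSum

variable {σ R : Type*} [CommSemiring R]

theorem eq_of_mem_support_of_totalDegree_le_degree {P : MvPolynomial σ R} {d m : σ →₀ ℕ}
    (hP : P.totalDegree ≤ d.degree) (hm : m ∈ P.support) (hdm : d ≤ m) : m = d := by
  obtain ⟨c, rfl⟩ := exists_add_of_le hdm
  have hdeg : (d + c).degree ≤ d.degree := (le_totalDegree hm).trans hP
  rw [map_add] at hdeg
  have hc : c = 0 := (Finsupp.degree_eq_zero_iff c).1 (by lia)
  rw [hc, add_zero]

variable [Fintype σ] [DecidableEq σ] {κ : σ → Type*}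

theorem sum_piFinset_prod_mul_eval (S : ∀ j, Finset (κ j)) (w a : ∀ j, κ j → R)
    (P : MvPolynomial σ R) :
    ∑ x ∈ Fintype.piFinset S, (∏ j, w j (x j)) * eval (fun j => a j (x j)) P
      = ∑ m ∈ P.support, coeff m P * ∏ j, ∑ k ∈ S j, w j k * a j k ^ m j := by
  simp_rw [eval_eq', mul_sum, prod_univ_sum, mul_sum, prod_mul_distrib]
  rw [sum_comm]
  exact sum_congr rfl fun m _ => sum_congr rfl fun x _ => mul_left_comm _ _ _

theorem sum_piFinset_prod_mul_eval_eq_coeff_mul {S : ∀ j, Finset (κ j)} {w a : ∀ j, κ j → R}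
    {P : MvPolynomial σ R} {d : σ →₀ ℕ}
    (hw : ∀ j, ∀ e < d j, ∑ k ∈ S j, w j k * a j k ^ e = 0)
    (hP : ∀ m ∈ P.support, d ≤ m → m = d) :
    ∑ x ∈ Fintype.piFinset S, (∏ j, w j (x j)) * eval (fun j => a j (x j)) P
      = coeff d P * ∏ j, ∑ k ∈ S j, w j k * a j k ^ d j := by
  rw [sum_piFinset_prod_mul_eval]
  refine sum_eq_single d (fun m hm hne => ?_) fun hd => ?_
  · obtain ⟨j, hj⟩ : ∃ j, m j < d j := by
      by_contra! hdm
      exact hne (hP m hm hdm)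
    rw [prod_eq_zero (mem_univ j) (hw j _ hj), mul_zero]
  · rw [notMem_support_iff.1 hd, zero_mul]

end WeightedGridSum

theorem coeff_formula_int_general {σ R : Type*} [Fintype σ] [DecidableEq σ] [CommRing R]
    (P : MvPolynomial σ R) (d : σ →₀ ℕ) (hP : ∀ m ∈ P.support, d ≤ m → m = d) :
    (-1) ^ (∑ j, d j) * (∏ j, ((d j).factorial : R)) * coeff d P
      = ∑ x ∈ Fintype.piFinset (fun j => range (d j + 1)),
          (∏ j, (-1) ^ (x j) * ((d j).choose (x j) : R)) * eval (fun j => (x j : R)) P := by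
  symm
  calc
    _ = coeff d P * ∏ j, ∑ k ∈ range (d j + 1),
          ((-1) ^ k * ((d j).choose k : R)) * (k : R) ^ d j :=
      sum_piFinset_prod_mul_eval_eq_coeff_mul
        (w := fun j k => (-1) ^ k * ((d j).choose k : R)) (a := fun _ k => (k : R))
        (fun _ _ he => sum_neg_one_pow_mul_choose_mul_pow_eq_zero_of_lt he) hP
    _ = coeff d P * ((-1) ^ (∑ j, d j) * ∏ j, ((d j).factorial : R)) := by
      simp only [sum_neg_one_pow_mul_choose_mul_pow_self, prod_mul_distrib, prod_pow_eq_pow_sum]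
    _ = _ := mul_comm _ _

/-- Coefficient formula over `ℤ` on the grid `{0,…,d_1} × ⋯ × {0,…,d_n}`:
`(−1)^{Σd} (∏ d_j!) P_d = ∑_x (∏_j (−1)^{x_j} C(d_j, x_j)) P(x)`. -/
theorem coeff_formula_int {n : ℕ} (P : MvPolynomial (Fin n) ℤ) (d : Fin n → ℕ)
    (hdeg : P.totalDegree ≤ ∑ j, d j) :
    (-1) ^ (∑ j, d j) * (∏ j, ((d j).factorial : ℤ))
        * MvPolynomial.coeff (Finsupp.equivFunOnFinite.symm d) P
      = ∑ x ∈ Fintype.piFinset (fun j => Finset.range (d j + 1)),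
          (∏ j, (-1) ^ (x j) * ((d j).choose (x j) : ℤ))
          * MvPolynomial.eval (fun j => ((x j : ℕ) : ℤ)) P :=
  coeff_formula_int_general P (Finsupp.equivFunOnFinite.symm d) fun _ =>
    eq_of_mem_support_of_totalDegree_le_degree <|
      hdeg.trans_eq (Finsupp.degree_eq_sum (Finsupp.equivFunOnFinite.symm d)).symm
end
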